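/- arXiv:1510.01410 — 2 statements merged into one kernel-verified Lean document; each statement's English description precedes it below -/
import Mathlib

section
/- Let E be a closed subset of the unit circle T with Lebesgue measure zero. Then there exists a function λ in the disk algebra A such that λ(z) = 0 for every z ∈ E and λ(z) ≠ 0 for every point z of the closed unit disk not in E (i.e., λ vanishes precisely on E). -/
open MeasureTheory Metric Set

/-!
Cover `E` repeatedly by countably many discs `ball (ζ i) (δ i)` centred on `E`, so that every point
of `E` lies in infinitely many of them while `∑ δ i < ∞`; this is possible since `E` is null
(`exists_cover`). The kernel `h i z = δ i / (1 + δ i - z * conj (ζ i))` has nonnegative real part on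
the closed unit disk, real part at least `1 / 4` on the part of the `i`-th disc inside it, and norm
at most `δ i / |z - ζ i|`. Hence `F = ∑ h i` converges locally uniformly on the closed disk off `E`,
and `Re F → +∞` at `E`. The function equal to `exp (-F)` off `E` and to `0` on `E` is as required.
-/

open Filter Topology ComplexConjugate

/-- The kernel attached to the disc of radius `d` centred at the point `c` of the unit circle. -/
noncomputable def fatouKernel (c : ℂ) (d : ℝ) (z : ℂ) : ℂ :=
  (d : ℂ) / (1 + d - z * conj c)

section Kernel

variable {c z : ℂ} {d : ℝ}

lemma norm_mul_conj_le (hc : ‖c‖ = 1) (hz : ‖z‖ ≤ 1) : ‖z * conj c‖ ≤ 1 := by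
  rw [norm_mul, RCLike.norm_conj, hc, mul_one]; exact hz

lemma le_re_den (hc : ‖c‖ = 1) (hz : ‖z‖ ≤ 1) : d ≤ (1 + d - z * conj c : ℂ).re := by
  have h := (Complex.re_le_norm (z * conj c)).trans (norm_mul_conj_le hc hz)
  rw [Complex.sub_re, Complex.add_re, Complex.one_re, Complex.ofReal_re]
  linarith

lemma den_ne_zero (hd : 0 < d) (hc : ‖c‖ = 1) (hz : ‖z‖ ≤ 1) : (1 + d - z * conj c : ℂ) ≠ 0 := by
  intro h
  have := le_re_den (d := d) hc hz
  rw [h, Complex.zero_re] at this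
  linarith

lemma norm_one_sub_mul_conj (hc : ‖c‖ = 1) : ‖1 - z * conj c‖ = dist z c := by
  have h1 : c * conj c = 1 := by rw [Complex.mul_conj']; simp [hc]
  rw [← h1, ← sub_mul, norm_mul, RCLike.norm_conj, hc, mul_one, dist_comm, dist_eq_norm]

lemma dist_le_norm_den (hd : 0 < d) (hc : ‖c‖ = 1) (hz : ‖z‖ ≤ 1) :
    dist z c ≤ ‖(1 + d - z * conj c : ℂ)‖ := by
  rw [← norm_one_sub_mul_conj hc]
  have h := (Complex.re_le_norm (z * conj c)).trans (norm_mul_conj_le hc hz)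
  generalize z * conj c = w at h ⊢
  rw [← sq_le_sq₀ (norm_nonneg _) (norm_nonneg _), ← Complex.normSq_eq_norm_sq,
    ← Complex.normSq_eq_norm_sq, Complex.normSq_apply, Complex.normSq_apply]
  simp only [Complex.sub_re, Complex.add_re, Complex.one_re, Complex.ofReal_re, Complex.sub_im,
    Complex.add_im, Complex.one_im, Complex.ofReal_im]
  nlinarith

lemma re_fatouKernel :
    (fatouKernel c d z).re =
      d * (1 + d - z * conj c : ℂ).re / ‖(1 + d - z * conj c : ℂ)‖ ^ 2 := by
  rw [fatouKernel, Complex.div_re, Complex.ofReal_re, Complex.ofReal_im,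
    ← Complex.normSq_eq_norm_sq]
  ring

lemma re_fatouKernel_nonneg (hd : 0 < d) (hc : ‖c‖ = 1) (hz : ‖z‖ ≤ 1) :
    0 ≤ (fatouKernel c d z).re := by
  have := hd.le.trans (le_re_den (d := d) hc hz)
  rw [re_fatouKernel]
  positivity

lemma le_re_fatouKernel (hd : 0 < d) (hc : ‖c‖ = 1) (hz : ‖z‖ ≤ 1) (hzc : dist z c < d) :
    1 / 4 ≤ (fatouKernel c d z).re := by
  have h1 := le_re_den (d := d) hc hz
  have h0 := norm_pos_iff.2 (den_ne_zero hd hc hz)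
  have h2 : ‖(1 + d - z * conj c : ℂ)‖ ≤ 2 * d := by
    have e : (1 + d - z * conj c : ℂ) = d + (1 - z * conj c) := by ring
    rw [e]
    refine (norm_add_le _ _).trans ?_
    rw [norm_one_sub_mul_conj hc, Complex.norm_real, Real.norm_of_nonneg hd.le]
    linarith
  rw [re_fatouKernel, div_le_div_iff₀ (by norm_num) (by positivity)]
  nlinarith

lemma norm_fatouKernel_le {r : ℝ} (hd : 0 < d) (hr : 0 < r) (hc : ‖c‖ = 1) (hz : ‖z‖ ≤ 1)
    (hzc : r ≤ dist z c) : ‖fatouKernel c d z‖ ≤ d / r := by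
  rw [fatouKernel, norm_div, Complex.norm_real, Real.norm_of_nonneg hd.le]
  exact div_le_div_of_nonneg_left hd.le hr (hzc.trans (dist_le_norm_den hd hc hz))

lemma differentiableAt_fatouKernel (hd : 0 < d) (hc : ‖c‖ = 1) (hz : ‖z‖ ≤ 1) :
    DifferentiableAt ℂ (fatouKernel c d) z := by
  unfold fatouKernel
  exact (differentiableAt_const _).div (by fun_prop) (den_ne_zero hd hc hz)

end Kernel

/-- A null subset of the circle has a countable family of discs centred on it, with summable radii,
covering each of its points infinitely often. -/
lemma exists_cover (E : Set ℂ) (hE_null : volume {θ : ℝ | circleMap 0 1 θ ∈ E} = 0)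
    (hE_sub : E ⊆ sphere (0 : ℂ) 1) :
    ∃ (ι : Type) (c : ι → ℂ) (d : ι → ℝ), (∀ i, c i ∈ E) ∧ (∀ i, 0 < d i) ∧ Summable d ∧
      ∀ z ∈ E, {i | dist z (c i) < d i}.Infinite := by
  set S : Set ℝ := {θ : ℝ | circleMap 0 1 θ ∈ E} with hS
  obtain ⟨ε, hε0, hε⟩ := ENNReal.exists_pos_sum_of_countable' (one_ne_zero (α := ENNReal)) ℕ
  have key : ∀ n : ℕ, ∃ (t : Set ℝ) (r : ℝ → ℝ), t ⊆ S ∧ (∀ x ∈ t, 0 < r x) ∧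
      (S ⊆ ⋃ x ∈ t, closedBall x (r x)) ∧ ∑' x : t, ENNReal.ofReal (2 * r x) ≤ ε n := by
    intro n
    obtain ⟨t, r, -, hts, hr, hcov, hsum⟩ :=
      Besicovitch.exists_closedBall_covering_tsum_measure_le (volume : Measure ℝ)
        (hε0 n).ne' (fun _ => Ioi 0) S
        (fun x _ δ hδ => ⟨δ / 2, half_pos hδ, half_pos hδ, half_lt_self hδ⟩)
    refine ⟨t, r, hts, hr, hcov, ?_⟩
    simpa [Real.volume_closedBall, hE_null] using hsum
  choose t r hts hr hcov hsum using key
  -- Doubling the radii makes the open discs contain the images of the closed intervals.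
  refine ⟨Σ n, t n, fun i => circleMap 0 1 i.2, fun i => 2 * r i.1 i.2, fun i => hts _ i.2.2,
    fun i => mul_pos two_pos (hr _ _ i.2.2), ?_, ?_⟩
  · have h : ∑' i : (Σ n, t n), ENNReal.ofReal (2 * r i.1 i.2) ≠ ⊤ := by
      rw [ENNReal.tsum_sigma']
      exact (((ENNReal.tsum_le_tsum hsum).trans_lt hε).trans ENNReal.one_lt_top).ne
    have h' := ENNReal.summable_toReal h
    refine h'.congr fun i => ?_
    exact ENNReal.toReal_ofReal (mul_pos two_pos (hr _ _ i.2.2)).le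
  · intro z hz
    obtain ⟨θ, rfl⟩ : ∃ θ, circleMap 0 1 θ = z := by
      have : z ∈ range (circleMap 0 1) := by
        rw [range_circleMap, abs_one]; exact hE_sub hz
      exact this
    have hx : ∀ n, ∃ x : t n, dist θ x ≤ r n x := by
      intro n
      obtain ⟨x, hx, hθ⟩ := mem_iUnion₂.1 (hcov n (show θ ∈ S from hz))
      exact ⟨⟨x, hx⟩, hθ⟩
    choose x hx using hx
    refine infinite_of_injective_forall_mem (f := fun n => (⟨n, x n⟩ : Σ n, t n))
      (fun a b hab => congrArg Sigma.fst hab) fun n => ?_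
    have hlip := (lipschitzWith_circleMap (0 : ℂ) 1).dist_le_mul θ (x n)
    have hpos := hr n _ (x n).2
    have h1 := hx n
    simp only [map_one, NNReal.coe_one, one_mul] at hlip
    change dist _ _ < 2 * r n (x n)
    linarith

/-- **Fatou's interpolation theorem (original form).**
If `E` is a closed subset of the unit circle of arc-length measure zero, then there is a
function `lam` in the disk algebra vanishing precisely on `E`. -/
theorem fatou_vanishing_function (E : Set ℂ)
    (hE_sub : E ⊆ sphere (0 : ℂ) 1) (hE_closed : IsClosed E)
    (hE_null : volume {θ : ℝ | circleMap 0 1 θ ∈ E} = 0) :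
    ∃ lam : ℂ → ℂ,
      ContinuousOn lam (closedBall (0 : ℂ) 1) ∧
      DifferentiableOn ℂ lam (ball (0 : ℂ) 1) ∧
      (∀ z ∈ E, lam z = 0) ∧
      (∀ z ∈ closedBall (0 : ℂ) 1 \ E, lam z ≠ 0) := by
  classical
  obtain ⟨ι, c, d, hcE, hd, hsum, hinf⟩ := exists_cover E hE_null hE_sub
  have hc : ∀ i, ‖c i‖ = 1 := fun i => by simpa using hE_sub (hcE i)
  set h : ι → ℂ → ℂ := fun i => fatouKernel (c i) (d i) with hh
  set F : ℂ → ℂ := fun z => ∑' i, h i z with hF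
  set lam : ℂ → ℂ := fun z => if z ∈ E then 0 else Complex.exp (-F z) with hlam
  -- Near a point off `E` the kernels are dominated by a fixed multiple of the radii.
  have hbound : ∀ z₀ ∉ E, ∃ r > 0, ball z₀ r ⊆ Eᶜ ∧
      ∀ i, ∀ z ∈ ball z₀ r, ‖z‖ ≤ 1 → ‖h i z‖ ≤ d i / r := by
    intro z₀ hz₀
    obtain ⟨R, hR, hRE⟩ := Metric.isOpen_iff.1 hE_closed.isOpen_compl z₀ hz₀
    refine ⟨R / 2, half_pos hR, (ball_subset_ball (half_le_self hR.le)).trans hRE,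
      fun i z hz hz1 => norm_fatouKernel_le (hd i) (half_pos hR) (hc i) hz1 ?_⟩
    have h1 : R ≤ dist (c i) z₀ := by
      by_contra! hlt
      exact hRE hlt (hcE i)
    have h2 := dist_triangle (c i) z z₀
    rw [mem_ball] at hz
    rw [dist_comm z]
    linarith
  have hlamEq : ∀ z₀ ∉ E, lam =ᶠ[𝓝 z₀] fun z => Complex.exp (-F z) := by
    intro z₀ hz₀
    filter_upwards [hE_closed.isOpen_compl.mem_nhds hz₀] with z hz
    exact if_neg hz
  -- Each disc containing `z` contributes at least `1 / 4` to `Re (F z)`; the others, at least `0`.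
  have hnorm : ∀ z, ‖z‖ ≤ 1 → ∀ s : Finset ι, (∀ i ∈ s, dist z (c i) < d i) →
      ‖lam z‖ ≤ Real.exp (-(s.card / 4)) := by
    intro z hz s hs
    by_cases hzE : z ∈ E
    · simp only [hlam, if_pos hzE, norm_zero]
      positivity
    · simp only [hlam, if_neg hzE, Complex.norm_exp, Complex.neg_re]
      obtain ⟨r, hr, -, hb⟩ := hbound z hzE
      have hS : Summable fun i => h i z :=
        Summable.of_norm_bounded (hsum.div_const r) fun i => hb i z (mem_ball_self hr) hz
      have hre : (F z).re = ∑' i, (h i z).re := Complex.re_tsum hS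
      have hSre : Summable fun i => (h i z).re := (Complex.hasSum_re hS.hasSum).summable
      have h1 : ∑ i ∈ s, (h i z).re ≤ (F z).re := by
        rw [hre]
        exact hSre.sum_le_tsum s fun i _ => re_fatouKernel_nonneg (hd i) (hc i) hz
      have h2 : s.card • (1 / 4 : ℝ) ≤ ∑ i ∈ s, (h i z).re :=
        Finset.card_nsmul_le_sum s _ _ fun i hi => le_re_fatouKernel (hd i) (hc i) hz (hs i hi)
      rw [nsmul_eq_mul] at h2
      apply Real.exp_le_exp.2
      linarith
  refine ⟨lam, ?_, ?_, fun z hz => if_pos hz, fun z hz => ?_⟩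
  · intro z₀ hz₀
    by_cases hzE : z₀ ∈ E
    · have h0 : lam z₀ = 0 := if_pos hzE
      rw [ContinuousWithinAt, h0, tendsto_zero_iff_norm_tendsto_zero, Metric.tendsto_nhds]
      intro ε hε
      have hlim : Tendsto (fun n : ℕ => Real.exp (-((n : ℝ) / 4))) atTop (𝓝 0) :=
        Real.tendsto_exp_neg_atTop_nhds_zero.comp
          (tendsto_natCast_atTop_atTop.atTop_div_const (by norm_num))
      obtain ⟨M, hM⟩ := (hlim.eventually (gt_mem_nhds hε)).exists
      obtain ⟨s, hsub, hcard⟩ := (hinf z₀ hzE).exists_subset_card_eq M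
      have hev : ∀ᶠ z in 𝓝[closedBall 0 1] z₀, ∀ i ∈ s, dist z (c i) < d i := by
        rw [Filter.eventually_all_finset]
        intro i hi
        exact nhdsWithin_le_nhds (isOpen_ball.mem_nhds (hsub hi))
      filter_upwards [hev, self_mem_nhdsWithin] with z hz hz1
      rw [Real.dist_0_eq_abs, abs_norm]
      have := hnorm z (by simpa using hz1) s hz
      rw [hcard] at this
      exact this.trans_lt hM
    · obtain ⟨r, hr, -, hb⟩ := hbound z₀ hzE
      have hFc : ContinuousOn F (closedBall 0 1 ∩ ball z₀ r) := by
        refine continuousOn_tsum (u := fun i => d i / r) (fun i z hz => ?_) (hsum.div_const r)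
          fun i z hz => hb i z hz.2 (by simpa using hz.1)
        exact (differentiableAt_fatouKernel (hd i) (hc i)
          (by simpa using hz.1)).continuousAt.continuousWithinAt
      have hFw : ContinuousWithinAt F (closedBall 0 1) z₀ :=
        (continuousWithinAt_inter (ball_mem_nhds z₀ hr)).1 (hFc z₀ ⟨hz₀, mem_ball_self hr⟩)
      exact (Complex.continuous_exp.continuousAt.comp_continuousWithinAt
        hFw.neg).congr_of_eventuallyEq (nhdsWithin_le_nhds (hlamEq z₀ hzE)) (if_neg hzE)
  · intro z₀ hz₀
    have hzE : z₀ ∉ E := fun hE => by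
      have h1 := hE_sub hE
      rw [mem_sphere] at h1
      rw [mem_ball] at hz₀
      linarith
    obtain ⟨r, hr, -, hb⟩ := hbound z₀ hzE
    have hle : ∀ z ∈ ball (0 : ℂ) 1 ∩ ball z₀ r, ‖z‖ ≤ 1 := fun z hz => by
      simpa using ball_subset_closedBall hz.1
    have hopen : IsOpen (ball (0 : ℂ) 1 ∩ ball z₀ r) := isOpen_ball.inter isOpen_ball
    have hFd : DifferentiableOn ℂ F (ball 0 1 ∩ ball z₀ r) :=
      Complex.differentiableOn_tsum_of_summable_norm (hsum.div_const r)
        (fun i z hz =>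
          (differentiableAt_fatouKernel (hd i) (hc i) (hle z hz)).differentiableWithinAt)
        hopen fun i z hz => hb i z hz.2 (hle z hz)
    have hFa : DifferentiableAt ℂ F z₀ :=
      hFd.differentiableAt (hopen.mem_nhds ⟨hz₀, mem_ball_self hr⟩)
    exact (hFa.neg.cexp.congr_of_eventuallyEq (hlamEq z₀ hzE)).differentiableWithinAt
  · simp only [hlam, if_neg hz.2]
    exact Complex.exp_ne_zero _
end

section
/- Let E be a closed subset of the unit circle T with Lebesgue measure zero, and let f be a continuous complex-valued function on E. Then there exists a function g in the disk algebra A such that g(z) = f(z) for every z ∈ E. -/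
open MeasureTheory Metric Set

/-!
The proof needs no boundary values, conjugate functions or duality; everything rests on explicit
rational functions.

If `|ζ| = 1` and `r > 0`, the function `z ↦ r / (1 + r - ζ̄ z)` has positive real part on the closed
disk, real part at least `1/4` within distance `r` of `ζ`, and modulus at most `r / |z - ζ|`.
Since `E` is compact and null, it is covered by finitely many balls centred on `E` whose radii
have an arbitrarily small sum. A large multiple `F` of the sum of the corresponding functions is
therefore large on `E` and small on any prescribed closed set `C` disjoint from `E`, so that
`h = F / (1 + F)` lies in the disk algebra, is bounded by `1`, is close to `1` on `E` and close to
`0` on `C` (`exists_peak`).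

With `C = {0}`, the function `(h - h 0) / z` is close to `z̄` on `E`, so by Stone–Weierstrass the
restrictions to `E` of the disk algebra are dense in `C(E)` (`exists_approx`). Multiplying an
approximant `a` of `f` by the `h` attached to the set `C` where `|a|` is large makes the
approximation norm-controlled (`exists_approx_bounded`), and summing the geometric series of
successive corrections gives exact interpolation.

Membership in the disk algebra is expressed as `DiffContOnCl ℂ g (ball 0 1)`.
-/

/-! ### Covering null sets by short arcs -/

/-- A compact null subset of the circle is covered by finitely many balls, centred on the set,
whose radii have small sum. The arcs come from a Besicovitch covering of the set of arguments
in `[0, 2π]`; the radii are doubled to make the covering balls open before compactness is used. -/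
lemma exists_cover_s2 {E : Set ℂ} (hE_sub : E ⊆ sphere (0 : ℂ) 1) (hE_closed : IsClosed E)
    (hE_null : volume {θ : ℝ | circleMap 0 1 θ ∈ E} = 0) {δ : ℝ} (hδ : 0 < δ) :
    ∃ (t : Finset ℝ) (r : ℝ → ℝ), (∀ x ∈ t, circleMap 0 1 x ∈ E) ∧ (∀ x ∈ t, 0 < r x) ∧
      (∀ z ∈ E, ∃ x ∈ t, dist z (circleMap 0 1 x) ≤ r x) ∧ ∑ x ∈ t, r x ≤ δ := by
  set S : Set ℝ := Icc 0 (2 * Real.pi) ∩ circleMap 0 1 ⁻¹' E with hS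
  have hSc : IsCompact S := isCompact_Icc.inter_right (hE_closed.preimage (continuous_circleMap 0 1))
  have hS0 : volume S = 0 := measure_mono_null inter_subset_right hE_null
  obtain ⟨t, r, htc, hts, hr, hcov, hsum⟩ :=
    Besicovitch.exists_closedBall_covering_tsum_measure_le (volume : Measure ℝ)
      (ε := ENNReal.ofReal δ) (by simpa using hδ) (fun _ => Ioi 0) S
      (fun x _ η hη => ⟨η / 2, by simp [hη], by simp [hη]⟩)
  rw [hS0, zero_add] at hsum
  obtain ⟨u, hu⟩ := hSc.elim_finite_subcover (fun x : t => ball (x : ℝ) (2 * r x))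
    (fun _ => isOpen_ball) (fun y hy => by
      obtain ⟨x, hx, hxy⟩ := mem_iUnion₂.1 (hcov hy)
      refine mem_iUnion.2 ⟨⟨x, hx⟩, ?_⟩
      have : 0 < r x := hr x hx
      exact lt_of_le_of_lt (mem_closedBall.1 hxy) (by linarith))
  refine ⟨u.map (Function.Embedding.subtype _), fun x => 2 * r x, ?_, ?_, ?_, ?_⟩
  · intro x hx
    obtain ⟨y, -, rfl⟩ := Finset.mem_map.1 hx
    exact (hts y.2).2
  · intro x hx
    obtain ⟨y, -, rfl⟩ := Finset.mem_map.1 hx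
    have : 0 < r y := hr y y.2
    simpa using this
  · intro z hz
    have : z ∈ circleMap 0 1 '' Ioc 0 (2 * Real.pi) := by
      rw [image_circleMap_Ioc, abs_one]
      exact hE_sub hz
    obtain ⟨θ, hθ, rfl⟩ := this
    obtain ⟨x, hx, hxθ⟩ := mem_iUnion₂.1 (hu (show θ ∈ S from ⟨⟨hθ.1.le, hθ.2⟩, hz⟩))
    refine ⟨x, Finset.mem_map.2 ⟨x, hx, rfl⟩, ?_⟩
    have hL := (lipschitzWith_circleMap 0 1).dist_le_mul θ x
    have : dist θ (x : ℝ) < 2 * r x := hxθ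
    simp at hL
    simp only [dist_eq_norm] at *
    linarith
  · rw [Finset.sum_map]
    have h1 : ∑ x ∈ u, ENNReal.ofReal (2 * r x) ≤ ENNReal.ofReal δ := by
      refine le_trans ?_ hsum
      refine le_trans (le_of_eq ?_) (ENNReal.sum_le_tsum u)
      simp [Real.volume_closedBall]
    rw [← ENNReal.ofReal_sum_of_nonneg] at h1
    · exact (ENNReal.ofReal_le_ofReal_iff hδ.le).1 h1
    · intro x _
      have : 0 < r x := hr x x.2
      positivity

/-! ### Rational functions with positive real part -/

/-- The function `r / (1 + r - ζ̄ z)`, whose real part on the disk is a bump at `ζ` of width `r`. -/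
noncomputable def bump (ζ : ℂ) (r : ℝ) (z : ℂ) : ℂ := r / (1 + r - star ζ * z)

section bump
variable {ζ z : ℂ} {r : ℝ}

lemma norm_one_sub_star_mul (hζ : ‖ζ‖ = 1) : ‖1 - star ζ * z‖ = dist z ζ := by
  have h : star ζ * ζ = 1 := by
    have := Complex.conj_mul' ζ
    simpa [hζ] using this
  rw [dist_comm, dist_eq_norm, ← h, ← mul_sub, norm_mul, norm_star, hζ, one_mul]

lemma re_star_mul_le (hζ : ‖ζ‖ = 1) (hz : ‖z‖ ≤ 1) : (star ζ * z).re ≤ 1 :=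
  (Complex.re_le_norm _).trans (by rw [norm_mul, norm_star, hζ, one_mul]; exact hz)

lemma bump_den_re (hζ : ‖ζ‖ = 1) (hz : ‖z‖ ≤ 1) : r ≤ (1 + r - star ζ * z : ℂ).re := by
  have := re_star_mul_le hζ hz
  rw [Complex.sub_re, Complex.add_re, Complex.one_re, Complex.ofReal_re]
  linarith

lemma bump_den_ne (hζ : ‖ζ‖ = 1) (hr : 0 < r) (hz : ‖z‖ ≤ 1) : (1 + r - star ζ * z : ℂ) ≠ 0 := by
  intro h
  have := bump_den_re (r := r) hζ hz
  rw [h, Complex.zero_re] at this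
  linarith

lemma bump_re (ζ z : ℂ) (r : ℝ) : (bump ζ r z).re =
    r * (1 + r - star ζ * z : ℂ).re / ‖(1 + r - star ζ * z : ℂ)‖ ^ 2 := by
  rw [bump, div_eq_mul_inv, Complex.re_ofReal_mul, Complex.inv_re, Complex.normSq_eq_norm_sq,
    mul_div_assoc]

lemma bump_re_nonneg (hζ : ‖ζ‖ = 1) (hr : 0 < r) (hz : ‖z‖ ≤ 1) : 0 ≤ (bump ζ r z).re := by
  have := bump_den_re (r := r) hζ hz
  rw [bump_re]
  have : 0 ≤ (1 + r - star ζ * z : ℂ).re := by linarith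
  positivity

lemma bump_re_ge (hζ : ‖ζ‖ = 1) (hr : 0 < r) (hz : ‖z‖ ≤ 1) (hd : dist z ζ ≤ r) :
    1 / 4 ≤ (bump ζ r z).re := by
  have h1 := bump_den_re (r := r) hζ hz
  have h2 : ‖(1 + r - star ζ * z : ℂ)‖ ≤ 2 * r := by
    have : (1 + r - star ζ * z : ℂ) = (1 - star ζ * z) + r := by ring
    rw [this]
    refine (norm_add_le _ _).trans ?_
    rw [norm_one_sub_star_mul hζ, Complex.norm_real, Real.norm_of_nonneg hr.le]
    linarith
  have h3 : 0 < ‖(1 + r - star ζ * z : ℂ)‖ := norm_pos_iff.2 (bump_den_ne hζ hr hz)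
  rw [bump_re, le_div_iff₀ (by positivity)]
  nlinarith

lemma norm_bump_le (hζ : ‖ζ‖ = 1) (hr : 0 < r) (hz : ‖z‖ ≤ 1) {d : ℝ} (hd0 : 0 < d)
    (hd : d ≤ dist z ζ) : ‖bump ζ r z‖ ≤ r / d := by
  rw [bump, norm_div, Complex.norm_real, Real.norm_of_nonneg hr.le]
  gcongr
  refine hd.trans ?_
  rw [← norm_one_sub_star_mul hζ, ← sq_le_sq₀ (norm_nonneg _) (norm_nonneg _),
    ← Complex.normSq_eq_norm_sq, ← Complex.normSq_eq_norm_sq, Complex.normSq_apply,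
    Complex.normSq_apply]
  have := re_star_mul_le hζ hz
  simp only [Complex.sub_re, Complex.add_re, Complex.one_re, Complex.ofReal_re, Complex.sub_im,
    Complex.add_im, Complex.one_im, Complex.ofReal_im] at *
  nlinarith

lemma bump_diffContOnCl (hζ : ‖ζ‖ = 1) (hr : 0 < r) :
    DiffContOnCl ℂ (bump ζ r) (ball 0 1) := by
  apply DifferentiableOn.diffContOnCl
  rw [closure_ball _ one_ne_zero]
  intro z hz
  have := bump_den_ne hζ hr (mem_closedBall_zero_iff.1 hz)
  unfold bump
  fun_prop (disch := assumption)

end bump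

/-! ### Approximate peak functions -/

/-- Approximate peak functions: in the disk algebra, bounded by `1`, close to `1` on the null
set `E`, and close to `0` on a closed set disjoint from `E`. -/
lemma exists_peak {E : Set ℂ} (hE_sub : E ⊆ sphere (0 : ℂ) 1) (hE_closed : IsClosed E)
    (hE_null : volume {θ : ℝ | circleMap 0 1 θ ∈ E} = 0) {C : Set ℂ} (hC : IsClosed C)
    (hCs : C ⊆ closedBall 0 1) (hd : Disjoint E C) {ε : ℝ} (hε : 0 < ε) :
    ∃ h : ℂ → ℂ, DiffContOnCl ℂ h (ball 0 1) ∧ (∀ z ∈ closedBall (0 : ℂ) 1, ‖h z‖ ≤ 1) ∧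
      (∀ z ∈ E, ‖1 - h z‖ ≤ ε) ∧ ∀ z ∈ C, ‖h z‖ ≤ ε := by
  have hEc : IsCompact E := (isCompact_sphere 0 1).of_isClosed_subset hE_closed hE_sub
  obtain ⟨d, hd0, hd⟩ := Metric.exists_pos_forall_lt_edist hEc hC hd
  have hd0' : (0 : ℝ) < d := hd0
  -- `M` makes `Re F ≥ 1 / ε` on `E`; the total radius then makes `|F| ≤ ε` on `C`.
  set M : ℝ := 4 / ε with hM
  have hM0 : 0 < M := by positivity
  obtain ⟨t, r, htE, hr, hcov, hsum⟩ := exists_cover_s2 hE_sub hE_closed hE_null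
    (δ := ε * d / M) (by positivity)
  have hζ : ∀ x : ℝ, ‖circleMap 0 1 x‖ = 1 := fun x => by simp
  set F : ℂ → ℂ := fun z => M * ∑ x ∈ t, bump (circleMap 0 1 x) (r x) z with hF
  have hFre : ∀ z ∈ closedBall (0 : ℂ) 1, 0 ≤ (F z).re := fun z hz => by
    rw [hF, Complex.re_ofReal_mul, Complex.re_sum]
    exact mul_nonneg hM0.le (Finset.sum_nonneg fun x hx =>
      bump_re_nonneg (hζ x) (hr x hx) (mem_closedBall_zero_iff.1 hz))
  have hre1 : ∀ z, 1 + (F z).re ≤ ‖1 + F z‖ := fun z => by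
    simpa using Complex.re_le_norm (1 + F z)
  have hne : ∀ z ∈ closedBall (0 : ℂ) 1, 1 + F z ≠ 0 := fun z hz h => by
    have h1 := hre1 z
    have h2 := hFre z hz
    rw [h, norm_zero] at h1
    linarith
  have hFd : DiffContOnCl ℂ F (ball 0 1) := by
    have hs : DiffContOnCl ℂ (fun z => ∑ x ∈ t, bump (circleMap 0 1 x) (r x) z) (ball 0 1) :=
      ⟨DifferentiableOn.fun_sum fun x hx => (bump_diffContOnCl (hζ x) (hr x hx)).1,
        continuousOn_finsetSum _ fun x hx => (bump_diffContOnCl (hζ x) (hr x hx)).2⟩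
    exact hs.const_smul (M : ℂ)
  refine ⟨fun z => (1 + F z)⁻¹ * F z, ?_, ?_, ?_, ?_⟩
  · refine DiffContOnCl.smul (DiffContOnCl.inv (hFd.const_add 1) fun z hz => ?_) hFd
    rw [closure_ball _ one_ne_zero] at hz
    exact hne z hz
  · intro z hz
    have h0 := norm_pos_iff.2 (hne z hz)
    rw [norm_mul, norm_inv, inv_mul_le_iff₀ h0, mul_one,
      ← sq_le_sq₀ (norm_nonneg _) (norm_nonneg _),
      ← Complex.normSq_eq_norm_sq, ← Complex.normSq_eq_norm_sq, Complex.normSq_apply,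
      Complex.normSq_apply]
    have := hFre z hz
    simp only [Complex.add_re, Complex.one_re, Complex.add_im, Complex.one_im]
    nlinarith
  · intro z hz
    have hz1 : z ∈ closedBall (0 : ℂ) 1 := sphere_subset_closedBall (hE_sub hz)
    have h0 := hne z hz1
    have h1 : 1 - (1 + F z)⁻¹ * F z = (1 + F z)⁻¹ := by field_simp; ring
    have h2 : ε⁻¹ ≤ (F z).re := by
      obtain ⟨x, hx, hxz⟩ := hcov z hz
      have hzn := mem_closedBall_zero_iff.1 hz1
      have h3 := bump_re_ge (hζ x) (hr x hx) hzn hxz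
      have h4 := Finset.single_le_sum (f := fun x => (bump (circleMap 0 1 x) (r x) z).re)
        (fun y hy => bump_re_nonneg (hζ y) (hr y hy) hzn) hx
      rw [hF, Complex.re_ofReal_mul, Complex.re_sum]
      calc ε⁻¹ = M * (1 / 4) := by rw [hM]; field_simp
        _ ≤ _ := by gcongr; exact h3.trans h4
    rw [h1, norm_inv]
    refine inv_le_of_inv_le₀ hε (h2.trans ?_)
    linarith [hre1 z]
  · intro z hz
    have hzn := mem_closedBall_zero_iff.1 (hCs hz)
    have hFn : ‖F z‖ ≤ ε := by
      rw [hF, norm_mul, Complex.norm_real, Real.norm_of_nonneg hM0.le]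
      calc M * ‖∑ x ∈ t, bump (circleMap 0 1 x) (r x) z‖ ≤ M * ∑ x ∈ t, r x / d := by
            gcongr
            refine norm_sum_le_of_le _ fun x hx => norm_bump_le (hζ x) (hr x hx) hzn hd0' ?_
            have := hd _ (htE x hx) z hz
            rw [edist_comm, edist_nndist, ENNReal.coe_lt_coe] at this
            exact_mod_cast this.le
        _ ≤ M * (ε * d / M / d) := by
            rw [← Finset.sum_div]
            gcongr
        _ = ε := by field_simp
    rw [norm_mul, norm_inv, inv_mul_le_iff₀ (norm_pos_iff.2 (hne z (hCs hz)))]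
    have h1 := hre1 z
    have h2 := hFre z (hCs hz)
    nlinarith

/-! ### Approximation on the null set -/

/-- The restrictions to `E` of functions in the disk algebra, as a subalgebra of `C(E, ℂ)`. -/
def restrictions (E : Set ℂ) : Subalgebra ℂ C(E, ℂ) where
  carrier := {φ | ∃ g : ℂ → ℂ, DiffContOnCl ℂ g (ball 0 1) ∧ ∀ z : E, φ z = g z}
  mul_mem' := by
    rintro φ ψ ⟨g, hg, hφ⟩ ⟨k, hk, hψ⟩
    exact ⟨fun z => g z * k z, hg.smul hk, fun z => by simp [hφ, hψ]⟩
  add_mem' := by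
    rintro φ ψ ⟨g, hg, hφ⟩ ⟨k, hk, hψ⟩
    exact ⟨fun z => g z + k z, hg.add hk, fun z => by simp [hφ, hψ]⟩
  algebraMap_mem' c := ⟨fun _ => c, diffContOnCl_const, fun z => by simp⟩

/-- Density of the disk algebra in `C(E)`. By Stone–Weierstrass it suffices to approximate `z̄`,
which is done by `(h z - h 0) / z` for a peak function `h` that is small at `0`. -/
lemma exists_approx {E : Set ℂ} (hE_sub : E ⊆ sphere (0 : ℂ) 1) (hE_closed : IsClosed E)
    (hE_null : volume {θ : ℝ | circleMap 0 1 θ ∈ E} = 0) {f : ℂ → ℂ} (hf : ContinuousOn f E)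
    {ε : ℝ} (hε : 0 < ε) :
    ∃ a : ℂ → ℂ, DiffContOnCl ℂ a (ball 0 1) ∧ ∀ z ∈ E, ‖f z - a z‖ ≤ ε := by
  have hEc : IsCompact E := (isCompact_sphere 0 1).of_isClosed_subset hE_closed hE_sub
  have : CompactSpace E := isCompact_iff_compactSpace.1 hEc
  have hstar : star (ContinuousMap.restrict E (.id ℂ)) ∈ (restrictions E).topologicalClosure := by
    rw [← SetLike.mem_coe, Subalgebra.topologicalClosure_coe, Metric.mem_closure_iff]
    intro η hη
    obtain ⟨h, hh, -, h1, h0⟩ := exists_peak hE_sub hE_closed hE_null (C := {0})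
      isClosed_singleton (by simp) (by
        rw [disjoint_singleton_right]
        intro h
        simpa using hE_sub h) (ε := η / 3) (by positivity)
    have h0 := h0 0 rfl
    have hcont : ContinuousOn h (closedBall 0 1) := by
      simpa [closure_ball (0 : ℂ) one_ne_zero] using hh.2
    have hqc : ContinuousOn (dslope h 0) (closedBall 0 1) :=
      (continuousOn_dslope (closedBall_mem_nhds _ one_pos)).2
        ⟨hcont, hh.1.differentiableAt (ball_mem_nhds _ one_pos)⟩
    have hq : DiffContOnCl ℂ (dslope h 0) (ball 0 1) :=
      ⟨(Complex.differentiableOn_dslope (ball_mem_nhds _ one_pos)).2 hh.1, by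
        rwa [closure_ball _ one_ne_zero]⟩
    refine ⟨⟨fun z : E => dslope h 0 z, ?_⟩, ⟨_, hq, fun z => rfl⟩, ?_⟩
    · exact (hqc.mono (hE_sub.trans sphere_subset_closedBall)).domRestrict
    · refine lt_of_le_of_lt ((ContinuousMap.dist_le (C := 2 * (η / 3)) (by positivity)).2 ?_)
        (by linarith)
      intro z
      have hz1 : ‖(z : ℂ)‖ = 1 := by simpa using hE_sub z.2
      have hz0 : (z : ℂ) ≠ 0 := by rw [← norm_pos_iff, hz1]; exact one_pos
      have hc : star (z : ℂ) = (z : ℂ)⁻¹ := (Complex.inv_eq_conj hz1).symm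
      have he : star (z : ℂ) - dslope h 0 z = (z : ℂ)⁻¹ * ((1 - h z) + h 0) := by
        rw [hc, dslope_of_ne _ hz0, slope_def_field]
        field_simp
        ring
      rw [dist_eq_norm]
      change ‖star (z : ℂ) - dslope h 0 z‖ ≤ _
      rw [he, norm_mul, norm_inv, hz1, inv_one, one_mul]
      refine (norm_add_le _ _).trans ?_
      linarith [h1 z z.2]
  have hall : ∀ φ : C(E, ℂ), φ ∈ (restrictions E).topologicalClosure := fun φ => by
    refine ContinuousMap.induction_on_of_compact (𝕜 := ℂ)
      (p := fun φ => φ ∈ (restrictions E).topologicalClosure) ?_ ?_ hstar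
      (fun _ _ => add_mem) (fun _ _ => mul_mem) ?_ φ
    · exact fun c => Subalgebra.algebraMap_mem _ c
    · exact (restrictions E).le_topologicalClosure ⟨id, differentiable_id.diffContOnCl, fun z => rfl⟩
    · intro ψ hψ
      exact (restrictions E).isClosed_topologicalClosure.mem_of_frequently_of_tendsto hψ
        Filter.tendsto_id
  have := hall ⟨E.domRestrict f, hf.domRestrict⟩
  rw [← SetLike.mem_coe, Subalgebra.topologicalClosure_coe, Metric.mem_closure_iff] at this
  obtain ⟨ψ, ⟨a, ha, hψ⟩, hd⟩ := this ε hε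
  refine ⟨a, ha, fun z hz => ?_⟩
  have := (ContinuousMap.dist_apply_le_dist (⟨z, hz⟩ : E)).trans hd.le
  rw [hψ, dist_eq_norm] at this
  exact this

/-- Norm-controlled approximation: one step of the successive corrections. -/
lemma exists_approx_bounded {E : Set ℂ} (hE_sub : E ⊆ sphere (0 : ℂ) 1) (hE_closed : IsClosed E)
    (hE_null : volume {θ : ℝ | circleMap 0 1 θ ∈ E} = 0) {f : ℂ → ℂ} (hf : ContinuousOn f E)
    {M : ℝ} (hM : 0 < M) (hfM : ∀ z ∈ E, ‖f z‖ ≤ M) :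
    ∃ g : ℂ → ℂ, DiffContOnCl ℂ g (ball 0 1) ∧ (∀ z ∈ closedBall (0 : ℂ) 1, ‖g z‖ ≤ 2 * M) ∧
      ∀ z ∈ E, ‖f z - g z‖ ≤ M / 2 := by
  obtain ⟨a, ha, haf⟩ := exists_approx hE_sub hE_closed hE_null hf (ε := M / 8) (by positivity)
  have hcont : ContinuousOn a (closedBall 0 1) := by
    simpa [closure_ball (0 : ℂ) one_ne_zero] using ha.2
  have haE : ∀ z ∈ E, ‖a z‖ ≤ 9 / 8 * M := fun z hz => by
    have h1 := norm_sub_le (f z) (f z - a z)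
    rw [sub_sub_cancel] at h1
    linarith [haf z hz, hfM z hz]
  obtain ⟨B, hB⟩ := (isCompact_closedBall (0 : ℂ) 1).exists_bound_of_continuousOn hcont
  have hB0 : 0 ≤ B := (norm_nonneg _).trans (hB 0 (by simp))
  set C : Set ℂ := closedBall 0 1 ∩ a ⁻¹' {w | 2 * M ≤ ‖w‖} with hCdef
  have hC : IsClosed C := hcont.preimage_isClosed_of_isClosed isClosed_closedBall
    (isClosed_le continuous_const continuous_norm)
  have hdisj : Disjoint E C := Set.disjoint_left.2 fun z hz hzC => by
    have h1 : 2 * M ≤ ‖a z‖ := hzC.2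
    linarith [haE z hz]
  obtain ⟨h, hh, hle, h1, h0⟩ := exists_peak hE_sub hE_closed hE_null hC inter_subset_left hdisj
    (ε := min (1 / 8) (2 * M / (B + 1))) (by positivity)
  refine ⟨fun z => h z * a z, hh.smul ha, fun z hz => ?_, fun z hz => ?_⟩
  · rw [norm_mul]
    by_cases hzC : z ∈ C
    · calc ‖h z‖ * ‖a z‖ ≤ (2 * M / (B + 1)) * (B + 1) := by
            gcongr
            · exact (h0 z hzC).trans (min_le_right _ _)
            · linarith [hB z hz]
        _ = 2 * M := by field_simp
    · have h2 : ‖a z‖ < 2 * M := by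
        by_contra hcon
        exact hzC ⟨hz, not_lt.1 hcon⟩
      nlinarith [hle z hz, norm_nonneg (a z)]
  · have he : f z - h z * a z = (f z - a z) + (1 - h z) * a z := by ring
    rw [he]
    refine (norm_add_le _ _).trans ?_
    rw [norm_mul]
    have h2 := (h1 z hz).trans (min_le_left _ _)
    have h3 : ‖1 - h z‖ * ‖a z‖ ≤ 1 / 8 * (9 / 8 * M) := by
      gcongr
      exact haE z hz
    linarith [haf z hz]

/-! ### Exact interpolation -/

/-- **The Rudin–Carleson interpolation theorem.**
If `E` is a closed subset of the unit circle of arc-length measure zero and `f` is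
continuous on `E`, then some `g` in the disk algebra agrees with `f` on `E`. -/
theorem rudin_carleson (E : Set ℂ)
    (hE_sub : E ⊆ sphere (0 : ℂ) 1) (hE_closed : IsClosed E)
    (hE_null : volume {θ : ℝ | circleMap 0 1 θ ∈ E} = 0)
    (f : ℂ → ℂ) (hf : ContinuousOn f E) :
    ∃ g : ℂ → ℂ,
      ContinuousOn g (closedBall (0 : ℂ) 1) ∧
      DifferentiableOn ℂ g (ball (0 : ℂ) 1) ∧
      (∀ z ∈ E, g z = f z) := by
  have hEc : IsCompact E := (isCompact_sphere 0 1).of_isClosed_subset hE_closed hE_sub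
  have hE1 : E ⊆ closedBall 0 1 := hE_sub.trans sphere_subset_closedBall
  have hcl : closure (ball (0 : ℂ) 1) = closedBall 0 1 := closure_ball _ one_ne_zero
  obtain ⟨B, hB⟩ := hEc.exists_bound_of_continuousOn hf
  set M : ℝ := max B 1
  have hM : 0 < M := lt_max_of_lt_right one_pos
  -- The hypotheses on `k` and `m` stay inside the existential, so that `choose` yields a total
  -- operator `G`, available for the recursion before its bounds are known.
  have step : ∀ (k : ℂ → ℂ) (m : ℝ), ∃ g : ℂ → ℂ, ContinuousOn k E → 0 < m →
      (∀ z ∈ E, ‖k z‖ ≤ m) → DiffContOnCl ℂ g (ball 0 1) ∧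
      (∀ z ∈ closedBall (0 : ℂ) 1, ‖g z‖ ≤ 2 * m) ∧ ∀ z ∈ E, ‖k z - g z‖ ≤ m / 2 := by
    intro k m
    by_cases h : ContinuousOn k E ∧ 0 < m ∧ ∀ z ∈ E, ‖k z‖ ≤ m
    · obtain ⟨g, hg⟩ := exists_approx_bounded hE_sub hE_closed hE_null h.1 h.2.1 h.2.2
      exact ⟨g, fun _ _ _ => hg⟩
    · exact ⟨0, fun h1 h2 h3 => absurd ⟨h1, h2, h3⟩ h⟩
  choose G hG using step
  -- `R n` is the error left on `E` after `n` corrections.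
  let R : ℕ → ℂ → ℂ := fun n => Nat.rec f (fun n k z => k z - G k (M / 2 ^ n) z) n
  have hRs : ∀ n z, R (n + 1) z = R n z - G (R n) (M / 2 ^ n) z := fun _ _ => rfl
  have hR : ∀ n, ContinuousOn (R n) E ∧ ∀ z ∈ E, ‖R n z‖ ≤ M / 2 ^ n := by
    intro n
    induction n with
    | zero => exact ⟨hf, fun z hz => by
        rw [pow_zero, div_one]
        exact (hB z hz).trans (le_max_left _ _)⟩
    | succ n ih =>
      obtain ⟨h1, -, h3⟩ := hG (R n) (M / 2 ^ n) ih.1 (by positivity) ih.2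
      refine ⟨ih.1.sub ((hcl ▸ h1.2).mono hE1), fun z hz => ?_⟩
      rw [hRs, pow_succ, ← div_div]
      exact h3 z hz
  set g : ℕ → ℂ → ℂ := fun n => G (R n) (M / 2 ^ n)
  have hg : ∀ n, DiffContOnCl ℂ (g n) (ball 0 1) ∧
      (∀ z ∈ closedBall (0 : ℂ) 1, ‖g n z‖ ≤ 2 * (M / 2 ^ n)) := fun n =>
    let h := hG (R n) (M / 2 ^ n) (hR n).1 (by positivity) (hR n).2
    ⟨h.1, h.2.1⟩
  have hsum : Summable fun n : ℕ => 2 * (M / 2 ^ n) := by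
    refine ((summable_geometric_two.mul_left M).congr fun n => ?_).mul_left 2
    rw [one_div, inv_pow, div_eq_mul_inv]
  refine ⟨fun z => ∑' n, g n z, ?_, ?_, fun z hz => ?_⟩
  · exact continuousOn_tsum (fun n => hcl ▸ (hg n).1.2) hsum fun n z hz => (hg n).2 z hz
  · exact Complex.differentiableOn_tsum_of_summable_norm hsum (fun n => (hg n).1.1) isOpen_ball
      fun n z hz => (hg n).2 z (ball_subset_closedBall hz)
  · have hpart : ∀ n, ∑ i ∈ Finset.range n, g i z = f z - R n z := by
      intro n
      induction n with
      | zero => exact (sub_self (f z)).symm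
      | succ n ih => rw [Finset.sum_range_succ, ih, hRs]; ring
    have hR0 : Filter.Tendsto (fun n => R n z) Filter.atTop (nhds 0) := by
      refine squeeze_zero_norm (fun n => (hR n).2 z hz) ?_
      simpa using hsum.tendsto_atTop_zero.div_const 2
    have hs : Summable fun n => g n z :=
      Summable.of_norm_bounded hsum fun n => (hg n).2 z (hE1 hz)
    refine tendsto_nhds_unique hs.hasSum.tendsto_sum_nat ?_
    simp_rw [hpart]
    simpa using hR0.const_sub (f z)
end
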